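/- Let G be a negative definite symmetric integer matrix on a finite set V whose off-diagonal entries lie in {0,1} and whose associated graph is a forest, with G(v₁,v₂) = 1, and let G' on V' = V ∪ {e} be the blow-up of G along the edge v₁v₂. For i ∈ ℤ let K̃_i = (K, p₁+1+2i, p₂+1+2i, −1−2i), the characteristic vector (K,p₁+1,p₂+1,−1) + i·e of G'; note P(K̃_i) = (K,p₁,p₂) for every i. Then for every characteristic vector (K,p₁,p₂) of G and every E ⊆ V there exists i ∈ {0,1} such that h'_U([K̃_i, E]) = h_U([(K,p₁,p₂), E]). Consequently the maximum of h'_U over each e-orbit of cubes {[K̃₀ + i·e, E] : i ∈ ℤ} equals the h_U-height of its image cube under P, and P admits a section of cubes preserving h_U (a singly filtered section). -/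

import Mathlib

/-! The form of the blow-up is `⟨(x,t),(x,t)⟩' = ⟨x,x⟩ - (t - x₁ - x₂)²`, and `K̃_i` is the functional
`(x,t) ↦ K·x - (1 + 2i)(t - x₁ - x₂)` (`blowupE_form`, `Ktilde_dotProduct`). Hence, for `I ⊆ V` and
`s = |I ∩ {v₁, v₂}|`, `h'_U(K̃_i + I) = h_U(K + I) - (s - i)(s - i - 1)` (`hU_Ktilde_chTrans`).
The correction is a product of consecutive integers, so no lift is higher than the original cube.

On `I ⊆ E` write `h_U(K + I) = h_U(K) + w(I)`, and let `m` be the minimum of `w`. The correction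
vanishes for `i = 0` unless `s = 2`, and for `i = 1` unless `s = 0`; otherwise it is `2`. Since `w`
takes even values (`even_weight_ind`), if both lifts are too low there are minimisers `A ⊇ {v₁, v₂}`
and `B` disjoint from `{v₁, v₂}`. The edge `v₁v₂` is a bridge of the forest; exchanging the parts of
`A` and `B` on one side of it destroys exactly this edge, so it produces two subsets of `E` of total
weight `2m - 2` (`exists_cut_paste`), which is impossible.
-/

open Matrix Finset

variable {V : Type*}

/-- Negative definiteness of a symmetric integer matrix, as a quadratic form over `ℚ`. -/
def MatNegDef [Fintype V] (G : Matrix V V ℤ) : Prop :=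
  ∀ x : V → ℚ, x ≠ 0 → x ⬝ᵥ (G.map (Int.cast : ℤ → ℚ)).mulVec x < 0

/-- `K` is a characteristic vector for `G`: `K v ≡ G v v (mod 2)` for all `v`. -/
def IsCharacteristic [Fintype V] (G : Matrix V V ℤ) (K : V → ℤ) : Prop :=
  ∀ v : V, (2 : ℤ) ∣ (K v - G v v)

/-- The translate `K + x` of a characteristic vector by `x : V → ℤ`. -/
def chTrans [Fintype V] (G : Matrix V V ℤ) (K : V → ℤ) (x : V → ℤ) : V → ℤ :=
  fun u => K u + 2 * G.mulVec x u

/-- `i` times the standard basis vector at `v`. -/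
def dirVec [DecidableEq V] (v : V) (i : ℤ) : V → ℤ := fun u => if u = v then i else 0

/-- The height function `h_U(K) = (Kᵀ G⁻¹ K + s)/4`. -/
noncomputable def hU [Fintype V] [DecidableEq V] (G : Matrix V V ℤ) (K : V → ℤ) : ℚ :=
  ((fun u => (K u : ℚ)) ⬝ᵥ ((G.map (Int.cast : ℤ → ℚ))⁻¹).mulVec (fun u => (K u : ℚ))
      + (Fintype.card V : ℚ)) / 4

/-- The height of a cube: `h_U([K,E]) = min_{I ⊆ E} h_U(K + Σ_{v ∈ I} e_v)`. -/
noncomputable def hUcube [Fintype V] [DecidableEq V] (G : Matrix V V ℤ) (K : V → ℤ)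
    (E : Finset V) : ℚ :=
  E.powerset.inf' (Finset.powerset_nonempty _)
    (fun I => hU G (chTrans G K (fun u => if u ∈ I then (1 : ℤ) else 0)))

/-- The graph of `G`: an edge between `u ≠ w` exactly when `G u w = 1`. -/
def graphOf (G : Matrix V V ℤ) : SimpleGraph V :=
  SimpleGraph.fromRel (fun u w => G u w = 1)

/-- The (unique, in a forest) path from `x` to `v` passes through `u`. -/
def onPath (Γ : SimpleGraph V) (x v u : V) : Prop :=
  ∃ p : Γ.Walk x v, p.IsPath ∧ u ∈ p.support

/-- `E_u^v`: the elements of `E` whose path to `v` passes through `u`. -/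
noncomputable def Esub (Γ : SimpleGraph V) (E : Finset V) (u v : V) : Finset V :=
  @Finset.filter _ (fun x => onPath Γ x v u) (Classical.decPred _) E

/-- The blow-up `G'` of `G` along the edge `v₁v₂`; `none` is the new vertex `e`. -/
def blowupE [DecidableEq V] (G : Matrix V V ℤ) (v₁ v₂ : V) :
    Matrix (Option V) (Option V) ℤ :=
  Matrix.of fun u w =>
    match u, w with
    | none, none => -1
    | none, some x => if x = v₁ ∨ x = v₂ then 1 else 0
    | some x, none => if x = v₁ ∨ x = v₂ then 1 else 0
    | some x, some y =>
        if (x = v₁ ∧ y = v₂) ∨ (x = v₂ ∧ y = v₁) then 0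
        else if x = y then (if x = v₁ ∨ x = v₂ then G x y - 1 else G x y)
        else G x y

/-- The blow-down projection `P`, sending `(K,p₁,p₂,j)` to `(K,p₁+j,p₂+j)`. -/
def blowdown [DecidableEq V] (v₁ v₂ : V) (K' : Option V → ℤ) : V → ℤ :=
  fun u => if u = v₁ ∨ u = v₂ then K' (some u) + K' none else K' (some u)

/-- The embedding of the old vertex set into the vertex set of the blow-up. -/
def someEmb (V : Type*) : V ↪ Option V := ⟨some, Option.some_injective V⟩

/-- `K̃_i = (K, p₁+1+2i, p₂+1+2i, −1−2i)`, the lift `(K,p₁+1,p₂+1,−1) + i·e` of `K`. -/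
def Ktilde [DecidableEq V] (v₁ v₂ : V) (K : V → ℤ) (i : ℤ) : Option V → ℤ :=
  fun o => match o with
  | none => -1 - 2 * i
  | some u => if u = v₁ ∨ u = v₂ then K u + 1 + 2 * i else K u

/-- The weight `K·x + xᵀGx`, by which translating `K` by `x` changes `h_U`. -/
def weight [Fintype V] (G : Matrix V V ℤ) (K x : V → ℤ) : ℤ :=
  K ⬝ᵥ x + x ⬝ᵥ G *ᵥ x

/-- The integer indicator function of a finite set of vertices. -/
def ind [DecidableEq V] (I : Finset V) : V → ℤ := fun u => if u ∈ I then (1 : ℤ) else 0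

/-! ### Heights and weights -/

lemma MatNegDef.isUnit_det [Fintype V] [DecidableEq V] {G : Matrix V V ℤ} (h : MatNegDef G) :
    IsUnit (G.map (Int.cast : ℤ → ℚ)).det := by
  rw [isUnit_iff_ne_zero]
  intro h0
  obtain ⟨x, hx, hx0⟩ := Matrix.exists_mulVec_eq_zero_iff.mpr h0
  have := h x hx
  simp [hx0] at this

/-- `h_U(K)` can be computed from any rational solution `y` of `G y = K`. -/
lemma hU_eq_of_mulVec [Fintype V] [DecidableEq V] {G : Matrix V V ℤ} (h : MatNegDef G)
    (K : V → ℤ) (y : V → ℚ)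
    (hy : (G.map (Int.cast : ℤ → ℚ)) *ᵥ y = fun u => (K u : ℚ)) :
    hU G K = ((fun u => (K u : ℚ)) ⬝ᵥ y + (Fintype.card V : ℚ)) / 4 := by
  have hinv : (G.map (Int.cast : ℤ → ℚ))⁻¹ *ᵥ (fun u => (K u : ℚ)) = y := by
    rw [← hy, Matrix.mulVec_mulVec, Matrix.nonsing_inv_mul _ h.isUnit_det, Matrix.one_mulVec]
  rw [hU, hinv]

lemma exists_mulVec_eq [Fintype V] [DecidableEq V] {G : Matrix V V ℤ} (h : MatNegDef G)
    (K : V → ℤ) : ∃ y : V → ℚ, (G.map (Int.cast : ℤ → ℚ)) *ᵥ y = fun u => (K u : ℚ) :=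
  ⟨(G.map (Int.cast : ℤ → ℚ))⁻¹ *ᵥ (fun u => (K u : ℚ)), by
    rw [Matrix.mulVec_mulVec, Matrix.mul_nonsing_inv _ h.isUnit_det, Matrix.one_mulVec]⟩

lemma dotProduct_mulVec_symm [Fintype V] {R : Type*} [CommRing R] {M : Matrix V V R}
    (h : M.IsSymm) (x y : V → R) : x ⬝ᵥ M *ᵥ y = y ⬝ᵥ M *ᵥ x := by
  rw [Matrix.dotProduct_mulVec, ← Matrix.mulVec_transpose, h.eq, dotProduct_comm]

lemma hU_chTrans [Fintype V] [DecidableEq V] {G : Matrix V V ℤ} (hsym : G.IsSymm)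
    (h : MatNegDef G) (K x : V → ℤ) :
    hU G (chTrans G K x) = hU G K + (weight G K x : ℚ) := by
  obtain ⟨y, hy⟩ := exists_mulVec_eq h K
  set M := G.map (Int.cast : ℤ → ℚ) with hM
  have hMs : M.IsSymm := hsym.map _
  set xq : V → ℚ := fun u => (x u : ℚ) with hxq
  set Kq : V → ℚ := fun u => (K u : ℚ) with hKq
  have hMx : ∀ u, (M *ᵥ xq) u = ((G *ᵥ x) u : ℚ) := by
    intro u; simp [Matrix.mulVec, dotProduct, hM, hxq]
  have hK' : (fun u => (chTrans G K x u : ℚ)) = Kq + (2 : ℚ) • (M *ᵥ xq) := by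
    funext u; simp [chTrans, hMx, hKq]
  have hw : (weight G K x : ℚ) = Kq ⬝ᵥ xq + xq ⬝ᵥ M *ᵥ xq := by
    simp only [weight, dotProduct, hMx]
    simp [hKq, hxq]
  have hxy : (M *ᵥ xq) ⬝ᵥ y = Kq ⬝ᵥ xq := by
    rw [dotProduct_comm, dotProduct_mulVec_symm hMs, hy, dotProduct_comm]
  rw [hU_eq_of_mulVec h K y hy, hU_eq_of_mulVec h (chTrans G K x) (y + (2 : ℚ) • xq)
    (by rw [hK', Matrix.mulVec_add, Matrix.mulVec_smul, hy]), hK', hw]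
  simp only [add_dotProduct, dotProduct_add, smul_dotProduct, dotProduct_smul, hxy, smul_eq_mul,
    dotProduct_comm (M *ᵥ xq) xq]
  ring

lemma hU_chTrans_ind [Fintype V] [DecidableEq V] {G : Matrix V V ℤ} (hsym : G.IsSymm)
    (h : MatNegDef G) (K : V → ℤ) (I : Finset V) :
    hU G (chTrans G K (fun u => if u ∈ I then (1 : ℤ) else 0))
      = hU G K + (weight G K (ind I) : ℚ) :=
  hU_chTrans hsym h K (ind I)

lemma weight_add [Fintype V] {G : Matrix V V ℤ} (hsym : G.IsSymm) (K x y : V → ℤ) :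
    weight G K (x + y) = weight G K x + weight G K y + 2 * (x ⬝ᵥ G *ᵥ y) := by
  simp only [weight, dotProduct_add, add_dotProduct, Matrix.mulVec_add]
  rw [dotProduct_mulVec_symm hsym y x]
  ring

/-- Weights of subsets are even: each vertex contributes `K v + G v v`, each edge contributes
twice. -/
lemma even_weight_ind [Fintype V] [DecidableEq V] {G : Matrix V V ℤ} (hsym : G.IsSymm)
    {K : V → ℤ} (hK : IsCharacteristic G K) (I : Finset V) : (2 : ℤ) ∣ weight G K (ind I) := by
  induction I using Finset.induction_on with
  | empty =>
    have : ind (∅ : Finset V) = 0 := by funext u; simp [ind]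
    simp [this, weight]
  | insert v I hv ih =>
    have hins : ind (insert v I) = ind I + Pi.single v 1 := by
      funext u
      by_cases huv : u = v
      · subst huv; simp [ind, hv]
      · simp [ind, huv]
    have hs : weight G K (Pi.single v 1) = K v + G v v := by
      simp [weight]
    have := hK v
    rw [hins, weight_add hsym, hs]
    omega

/-! ### The form of the blow-up -/

/-- The indicator of the two endpoints of the blown-up edge. -/
def endInd [DecidableEq V] (R : Type*) [CommRing R] (v₁ v₂ : V) : V → R :=
  fun u => if u = v₁ ∨ u = v₂ then 1 else 0

lemma endInd_dotProduct [Fintype V] [DecidableEq V] {R : Type*} [CommRing R] {v₁ v₂ : V}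
    (hne : v₁ ≠ v₂) (z : V → R) : endInd R v₁ v₂ ⬝ᵥ z = z v₁ + z v₂ := by
  have : endInd R v₁ v₂ = Pi.single v₁ 1 + Pi.single v₂ 1 := by
    funext u
    by_cases h1 : u = v₁
    · subst h1; simp [endInd, hne]
    · by_cases h2 : u = v₂
      · subst h2; simp [endInd, h1]
      · simp [endInd, h1, h2]
  simp [this, add_dotProduct]

lemma blowupE_some_some [DecidableEq V] {G : Matrix V V ℤ} (hsym : G.IsSymm)
    {v₁ v₂ : V} (hne : v₁ ≠ v₂) (hedge : G v₁ v₂ = 1) (x y : V) :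
    blowupE G v₁ v₂ (some x) (some y) = G x y - endInd ℤ v₁ v₂ x * endInd ℤ v₁ v₂ y := by
  have hedge' : G v₂ v₁ = 1 := by rw [hsym.apply]; exact hedge
  simp only [blowupE, endInd, Matrix.of_apply]
  by_cases h1 : x = v₁ <;> by_cases h2 : x = v₂ <;> by_cases h3 : y = v₁ <;>
    by_cases h4 : y = v₂ <;> simp_all <;> grind

lemma blowupE_isSymm [DecidableEq V] {G : Matrix V V ℤ} (hsym : G.IsSymm)
    {v₁ v₂ : V} (hne : v₁ ≠ v₂) (hedge : G v₁ v₂ = 1) : (blowupE G v₁ v₂).IsSymm := by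
  ext o o'
  rw [Matrix.transpose_apply]
  cases o <;> cases o' <;> try rfl
  rw [blowupE_some_some hsym hne hedge, blowupE_some_some hsym hne hedge, hsym.apply, mul_comm]

lemma blowupE_mulVec_none [Fintype V] [DecidableEq V] {R : Type*} [CommRing R]
    (G : Matrix V V ℤ) {v₁ v₂ : V} (hne : v₁ ≠ v₂) (z : Option V → R) :
    ((blowupE G v₁ v₂).map (Int.cast : ℤ → R) *ᵥ z) none
      = -(z none - z (some v₁) - z (some v₂)) := by
  have h := endInd_dotProduct (R := R) hne (fun u => z (some u))
  simp only [Matrix.mulVec, dotProduct, Fintype.sum_option, Matrix.map_apply] at h ⊢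
  have h' : ∀ u, ((blowupE G v₁ v₂ none (some u) : ℤ) : R) = endInd R v₁ v₂ u := by
    intro u; simp [blowupE, endInd]
  simp only [h', h]
  simp [blowupE]
  ring

lemma blowupE_mulVec_some [Fintype V] [DecidableEq V] {R : Type*} [CommRing R]
    {G : Matrix V V ℤ} (hsym : G.IsSymm) {v₁ v₂ : V} (hne : v₁ ≠ v₂) (hedge : G v₁ v₂ = 1)
    (z : Option V → R) (u : V) :
    ((blowupE G v₁ v₂).map (Int.cast : ℤ → R) *ᵥ z) (some u)
      = (G.map (Int.cast : ℤ → R) *ᵥ fun w => z (some w)) u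
        + endInd R v₁ v₂ u * (z none - z (some v₁) - z (some v₂)) := by
  have h := endInd_dotProduct (R := R) hne (fun u => z (some u))
  have hc : ∀ w, ((endInd ℤ v₁ v₂ w : ℤ) : R) = endInd R v₁ v₂ w := by
    intro w; simp [endInd]
  have h0 : ((blowupE G v₁ v₂ (some u) none : ℤ) : R) = endInd R v₁ v₂ u := by
    simp [blowupE, endInd]
  simp only [Matrix.mulVec, dotProduct, Fintype.sum_option, Matrix.map_apply] at h ⊢
  simp only [h0, blowupE_some_some hsym hne hedge, Int.cast_sub, Int.cast_mul, hc, sub_mul,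
    Finset.sum_sub_distrib, mul_assoc, ← Finset.mul_sum, h]
  ring

/-- The form of the blow-up is `⟨(x,t),(x,t)⟩' = ⟨x,x⟩ - (t - x₁ - x₂)²`. -/
lemma blowupE_form [Fintype V] [DecidableEq V] {R : Type*} [CommRing R]
    {G : Matrix V V ℤ} (hsym : G.IsSymm) {v₁ v₂ : V} (hne : v₁ ≠ v₂) (hedge : G v₁ v₂ = 1)
    (z : Option V → R) :
    z ⬝ᵥ ((blowupE G v₁ v₂).map (Int.cast : ℤ → R) *ᵥ z)
      = (fun w => z (some w)) ⬝ᵥ (G.map (Int.cast : ℤ → R) *ᵥ fun w => z (some w))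
        - (z none - z (some v₁) - z (some v₂)) ^ 2 := by
  have h := endInd_dotProduct (R := R) hne (fun u => z (some u))
  simp only [dotProduct] at h
  rw [dotProduct, Fintype.sum_option, blowupE_mulVec_none G hne]
  simp only [blowupE_mulVec_some hsym hne hedge, mul_add, Finset.sum_add_distrib]
  have h2 : ∑ u, z (some u) * (endInd R v₁ v₂ u * (z none - z (some v₁) - z (some v₂)))
      = (z (some v₁) + z (some v₂)) * (z none - z (some v₁) - z (some v₂)) := by
    rw [← h, Finset.sum_mul]
    exact Finset.sum_congr rfl fun u _ => by ring
  rw [h2, dotProduct]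
  ring

lemma blowupE_matNegDef [Fintype V] [DecidableEq V] {G : Matrix V V ℤ} (hsym : G.IsSymm)
    (hneg : MatNegDef G) {v₁ v₂ : V} (hne : v₁ ≠ v₂) (hedge : G v₁ v₂ = 1) :
    MatNegDef (blowupE G v₁ v₂) := by
  intro z hz
  rw [blowupE_form hsym hne hedge]
  by_cases h0 : (fun w => z (some w)) = 0
  · have hs : ∀ w, z (some w) = 0 := fun w => congrFun h0 w
    have hn : z none ≠ 0 := by
      intro hn
      apply hz
      funext o
      cases o with
      | none => exact hn
      | some w => exact hs w
    rw [h0, hs, hs]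
    have := sq_pos_of_ne_zero hn
    simpa using this
  · have := hneg _ h0
    have := sq_nonneg (z none - z (some v₁) - z (some v₂))
    linarith

lemma Ktilde_some [DecidableEq V] (v₁ v₂ : V) (K : V → ℤ) (i : ℤ) (u : V) :
    Ktilde v₁ v₂ K i (some u) = K u + (1 + 2 * i) * endInd ℤ v₁ v₂ u := by
  simp only [Ktilde, endInd]
  split_ifs <;> ring

/-- `K̃_i`, as a functional, is `(x,t) ↦ K·x - (1 + 2i)(t - x₁ - x₂)`. -/
lemma Ktilde_dotProduct [Fintype V] [DecidableEq V] {R : Type*} [CommRing R] {v₁ v₂ : V}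
    (hne : v₁ ≠ v₂) (K : V → ℤ) (i : ℤ) (z : Option V → R) :
    (fun o => (Ktilde v₁ v₂ K i o : R)) ⬝ᵥ z
      = (fun u => (K u : R)) ⬝ᵥ (fun u => z (some u))
        - (1 + 2 * i) * (z none - z (some v₁) - z (some v₂)) := by
  have h := endInd_dotProduct (R := R) hne (fun u => z (some u))
  have hc : ∀ w, ((endInd ℤ v₁ v₂ w : ℤ) : R) = endInd R v₁ v₂ w := by
    intro w; simp [endInd]
  simp only [dotProduct, Fintype.sum_option, Ktilde_some] at h ⊢
  simp only [Int.cast_add, Int.cast_mul, hc, add_mul, Finset.sum_add_distrib, mul_assoc,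
    ← Finset.mul_sum, h]
  simp [Ktilde]
  ring

lemma hU_Ktilde [Fintype V] [DecidableEq V] {G : Matrix V V ℤ} (hsym : G.IsSymm)
    (hneg : MatNegDef G) {v₁ v₂ : V} (hne : v₁ ≠ v₂) (hedge : G v₁ v₂ = 1)
    (K : V → ℤ) (i : ℤ) :
    hU (blowupE G v₁ v₂) (Ktilde v₁ v₂ K i) = hU G K - ((i * (i + 1) : ℤ) : ℚ) := by
  obtain ⟨y, hy⟩ := exists_mulVec_eq hneg K
  -- The last coordinate is forced by `t - y₁ - y₂ = 1 + 2i`.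
  let z : Option V → ℚ := fun o => o.elim (1 + 2 * i + y v₁ + y v₂) y
  have hz : z none - z (some v₁) - z (some v₂) = 1 + 2 * i := by simp [z]; ring
  have hzs : (fun u => z (some u)) = y := rfl
  rw [hU_eq_of_mulVec hneg K y hy,
    hU_eq_of_mulVec (blowupE_matNegDef hsym hneg hne hedge) (Ktilde v₁ v₂ K i) z ?_,
    Ktilde_dotProduct hne, hz, hzs, Fintype.card_option]
  · push_cast
    ring
  · funext o
    cases o with
    | none =>
      rw [blowupE_mulVec_none G hne, hz]
      simp [Ktilde]
      ring
    | some u =>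
      rw [blowupE_mulVec_some hsym hne hedge, hz, hzs, hy, Ktilde_some]
      simp [endInd]

/-- With `s = |I ∩ {v₁, v₂}|`, a vertex of the lifted cube lies below the corresponding vertex of
`[K, E]` by exactly `(s - i)(s - i - 1)`. -/
lemma hU_Ktilde_chTrans [Fintype V] [DecidableEq V] {G : Matrix V V ℤ} (hsym : G.IsSymm)
    (hneg : MatNegDef G) {v₁ v₂ : V} (hne : v₁ ≠ v₂) (hedge : G v₁ v₂ = 1)
    (K : V → ℤ) (i : ℤ) (I : Finset V) :
    hU (blowupE G v₁ v₂) (chTrans (blowupE G v₁ v₂) (Ktilde v₁ v₂ K i)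
        (fun o => if o ∈ I.map (someEmb V) then (1 : ℤ) else 0))
      = hU G K + ((weight G K (ind I)
        - (ind I v₁ + ind I v₂ - i) * (ind I v₁ + ind I v₂ - i - 1) : ℤ) : ℚ) := by
  rw [hU_chTrans_ind (blowupE_isSymm hsym hne hedge) (blowupE_matNegDef hsym hneg hne hedge),
    hU_Ktilde hsym hneg hne hedge]
  have hs : ∀ u, ind (I.map (someEmb V)) (some u) = ind I u := by
    intro u; simp [ind, someEmb]
  have hn : ind (I.map (someEmb V)) none = 0 := by simp [ind, someEmb]
  have h1 := Ktilde_dotProduct (R := ℤ) hne K i (ind (I.map (someEmb V)))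
  have h2 := blowupE_form (R := ℤ) hsym hne hedge (ind (I.map (someEmb V)))
  have hid : (Int.cast : ℤ → ℤ) = id := rfl
  simp only [hs, hn, Int.cast_id, hid, Matrix.map_id] at h1 h2
  have hw : weight (blowupE G v₁ v₂) (Ktilde v₁ v₂ K i) (ind (I.map (someEmb V)))
      = weight G K (ind I) + (1 + 2 * i) * (ind I v₁ + ind I v₂)
        - (ind I v₁ + ind I v₂) ^ 2 := by
    simp only [weight]
    rw [h1, h2]
    ring
  rw [hw]
  push_cast
  ring

/-! ### Minima over cubes -/

lemma hUcube_le [Fintype V] [DecidableEq V] {G : Matrix V V ℤ} (hsym : G.IsSymm)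
    (hneg : MatNegDef G) (K : V → ℤ) {E I : Finset V} (hI : I ⊆ E) :
    hUcube G K E ≤ hU G K + (weight G K (ind I) : ℚ) := by
  rw [← hU_chTrans_ind hsym hneg]
  exact Finset.inf'_le _ (Finset.mem_powerset.mpr hI)

lemma exists_hUcube_eq [Fintype V] [DecidableEq V] {G : Matrix V V ℤ} (hsym : G.IsSymm)
    (hneg : MatNegDef G) (K : V → ℤ) (E : Finset V) :
    ∃ I ⊆ E, hUcube G K E = hU G K + (weight G K (ind I) : ℚ) := by
  obtain ⟨I, hI, h⟩ := Finset.exists_mem_eq_inf' (Finset.powerset_nonempty E)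
    (fun I => hU G (chTrans G K (fun u => if u ∈ I then (1 : ℤ) else 0)))
  exact ⟨I, Finset.mem_powerset.mp hI, h.trans (hU_chTrans_ind hsym hneg K I)⟩

lemma hUcube_Ktilde_le [Fintype V] [DecidableEq V] {G : Matrix V V ℤ} (hsym : G.IsSymm)
    (hneg : MatNegDef G) {v₁ v₂ : V} (hne : v₁ ≠ v₂) (hedge : G v₁ v₂ = 1)
    (K : V → ℤ) (i : ℤ) (E : Finset V) :
    hUcube (blowupE G v₁ v₂) (Ktilde v₁ v₂ K i) (E.map (someEmb V)) ≤ hUcube G K E := by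
  obtain ⟨I, hI, h⟩ := exists_hUcube_eq hsym hneg K E
  rw [h]
  refine (Finset.inf'_le _ (Finset.mem_powerset.mpr (Finset.map_subset_map.mpr hI))).trans ?_
  rw [hU_Ktilde_chTrans hsym hneg hne hedge]
  -- A product of two consecutive integers is nonnegative.
  have : 0 ≤ (ind I v₁ + ind I v₂ - i) * (ind I v₁ + ind I v₂ - i - 1) := by
    rcases le_or_gt (ind I v₁ + ind I v₂ - i) 0 with h | h
    · exact mul_nonneg_of_nonpos_of_nonpos h (by omega)
    · exact mul_nonneg h.le (by omega)
  have : weight G K (ind I)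
      - (ind I v₁ + ind I v₂ - i) * (ind I v₁ + ind I v₂ - i - 1) ≤ weight G K (ind I) := by
    omega
  have : ((weight G K (ind I)
      - (ind I v₁ + ind I v₂ - i) * (ind I v₁ + ind I v₂ - i - 1) : ℤ) : ℚ)
      ≤ (weight G K (ind I) : ℚ) := by exact_mod_cast this
  linarith

/-- If `[K̃_i, E]` is not of the same height as `[K, E]`, then some vertex of it is strictly lower
than every vertex of `[K, E]`. -/
lemma exists_lt_of_hUcube_ne [Fintype V] [DecidableEq V] {G : Matrix V V ℤ} (hsym : G.IsSymm)
    (hneg : MatNegDef G) {v₁ v₂ : V} (hne : v₁ ≠ v₂) (hedge : G v₁ v₂ = 1)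
    (K : V → ℤ) (i : ℤ) (E : Finset V)
    (h : hUcube (blowupE G v₁ v₂) (Ktilde v₁ v₂ K i) (E.map (someEmb V)) ≠ hUcube G K E) :
    ∃ I ⊆ E, ∀ J ⊆ E, weight G K (ind I)
      - (ind I v₁ + ind I v₂ - i) * (ind I v₁ + ind I v₂ - i - 1) < weight G K (ind J) := by
  have hlt := lt_of_le_of_ne (hUcube_Ktilde_le hsym hneg hne hedge K i E) h
  rw [hUcube, Finset.inf'_lt_iff] at hlt
  obtain ⟨I', hI', hlt⟩ := hlt
  obtain ⟨I, hI, rfl⟩ := Finset.subset_map_iff.mp (Finset.mem_powerset.mp hI')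
  refine ⟨I, hI, fun J hJ => ?_⟩
  rw [hU_Ktilde_chTrans hsym hneg hne hedge] at hlt
  have := hlt.trans_le (hUcube_le hsym hneg K hJ)
  exact_mod_cast lt_of_add_lt_add_left this

/-! ### Cutting the forest along the edge -/

/-- Deleting the edge `v₁v₂` of the forest leaves a side `S ∋ v₁` that the matrix joins to its
complement only through that edge. -/
lemma exists_side [DecidableEq V] {G : Matrix V V ℤ}
    (hoff : ∀ u w : V, u ≠ w → G u w = 0 ∨ G u w = 1)
    (hforest : (graphOf G).IsAcyclic)
    {v₁ v₂ : V} (hne : v₁ ≠ v₂) (hedge : G v₁ v₂ = 1) :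
    ∃ S : Set V, v₁ ∈ S ∧ v₂ ∉ S ∧
      ∀ u ∈ S, ∀ w ∉ S, ¬(u = v₁ ∧ w = v₂) → G u w = 0 := by
  have hadj : ∀ u w, u ≠ w → G u w = 1 → (graphOf G).Adj u w := by
    intro u w huw h
    rw [graphOf, SimpleGraph.fromRel_adj]
    exact ⟨huw, Or.inl h⟩
  have hbr := SimpleGraph.isAcyclic_iff_forall_adj_isBridge.mp hforest (hadj v₁ v₂ hne hedge)
  rw [SimpleGraph.isBridge_iff] at hbr
  set H := (graphOf G).deleteEdges {s(v₁, v₂)} with hH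
  have hbr' : ¬ H.Reachable v₁ v₂ := by
    exact hbr
  refine ⟨{u | H.Reachable v₁ u}, SimpleGraph.Reachable.refl _, hbr', ?_⟩
  intro u hu w hw hnot
  have huw : u ≠ w := by rintro rfl; exact hw hu
  refine (hoff u w huw).resolve_right fun h1 => hw ?_
  have hHa : H.Adj u w := by
    rw [hH, SimpleGraph.deleteEdges_adj]
    refine ⟨hadj u w huw h1, ?_⟩
    rw [Set.mem_singleton_iff, Sym2.eq_iff]
    rintro (h | ⟨rfl, rfl⟩)
    · exact hnot h
    · exact hbr' hu
  exact SimpleGraph.Reachable.trans hu hHa.reachable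

/-- Cut and paste: if `A` contains both ends of the edge and `B` neither, swapping the parts of `A`
and `B` on one side of the edge lowers the total weight by `2`. -/
lemma exists_cut_paste [Fintype V] [DecidableEq V] {G : Matrix V V ℤ} (hsym : G.IsSymm)
    (hoff : ∀ u w : V, u ≠ w → G u w = 0 ∨ G u w = 1)
    (hforest : (graphOf G).IsAcyclic)
    {v₁ v₂ : V} (hne : v₁ ≠ v₂) (hedge : G v₁ v₂ = 1) (K : V → ℤ) {A B E : Finset V}
    (hA : A ⊆ E) (hB : B ⊆ E) (hA₁ : v₁ ∈ A) (hA₂ : v₂ ∈ A) (hB₁ : v₁ ∉ B) (hB₂ : v₂ ∉ B) :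
    ∃ C ⊆ E, ∃ D ⊆ E,
      weight G K (ind C) + weight G K (ind D) = weight G K (ind A) + weight G K (ind B) - 2 := by
  classical
  obtain ⟨S, h₁, h₂, hS⟩ := exists_side hoff hforest hne hedge
  -- `d = 1_A - 1_B` is split into its part `p` on `S` and its part `q` off `S`.
  let p : V → ℤ := fun u => if u ∈ S then ind A u - ind B u else 0
  let q : V → ℤ := fun u => if u ∈ S then 0 else ind A u - ind B u
  have hpq : p ⬝ᵥ G *ᵥ q = 1 := by
    have hterm : ∀ u w, p u * (G u w * q w) = if u = v₁ then (if w = v₂ then 1 else 0) else 0 := by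
      intro u w
      by_cases hu : u ∈ S
      · by_cases hw : w ∈ S
        · have : w ≠ v₂ := by rintro rfl; exact h₂ hw
          simp [q, hw, this]
        · by_cases huw : u = v₁ ∧ w = v₂
          · obtain ⟨rfl, rfl⟩ := huw
            simp [p, q, h₁, h₂, ind, hA₁, hA₂, hB₁, hB₂, hedge]
          · rw [hS u hu w hw huw]
            by_cases hu1 : u = v₁
            · have : w ≠ v₂ := fun h => huw ⟨hu1, h⟩
              simp [this]
            · simp [hu1]
      · have : u ≠ v₁ := by rintro rfl; exact hu h₁
        simp [p, hu, this]
    simp only [dotProduct, Matrix.mulVec, Finset.mul_sum, hterm]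
    simp
  refine ⟨{u ∈ E | if u ∈ S then u ∈ A else u ∈ B}, Finset.filter_subset _ _,
    {u ∈ E | if u ∈ S then u ∈ B else u ∈ A}, Finset.filter_subset _ _, ?_⟩
  have hC : ind {u ∈ E | if u ∈ S then u ∈ A else u ∈ B} = ind B + p := by
    funext u
    have := @hA u
    have := @hB u
    by_cases hu : u ∈ S <;> simp [ind, p, hu] <;> grind
  have hD : ind {u ∈ E | if u ∈ S then u ∈ B else u ∈ A} = ind B + q := by
    funext u
    have := @hA u
    have := @hB u
    by_cases hu : u ∈ S <;> simp [ind, q, hu] <;> grind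
  have hAe : ind A = ind B + (p + q) := by
    funext u
    by_cases hu : u ∈ S <;> simp [p, q, hu]
  rw [hC, hD, hAe, weight_add hsym, weight_add hsym, weight_add hsym, weight_add hsym, hpq,
    Matrix.mulVec_add, dotProduct_add]
  ring

/-- the singly filtered section `φ`: for every characteristic vector `K`
of `G` and every `E ⊆ V` there is `i ∈ {0,1}` with `h'_U([K̃_i,E]) = h_U([K,E])`; moreover
`P(K̃_i) = K` for all `i`, and `h_U([K,E])` is the maximum of `h'_U` over the `e`-orbit
`{[K̃_i,E] : i ∈ ℤ}`. Hence `P` admits a singly filtered section of cubes. -/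
theorem exists_hU_preserving_section [Fintype V] [DecidableEq V]
    (G : Matrix V V ℤ) (hsym : G.IsSymm) (hneg : MatNegDef G)
    (hoff : ∀ u w : V, u ≠ w → G u w = 0 ∨ G u w = 1)
    (hforest : (graphOf G).IsAcyclic)
    (v₁ v₂ : V) (hne : v₁ ≠ v₂) (hedge : G v₁ v₂ = 1)
    (K : V → ℤ) (hK : IsCharacteristic G K) (E : Finset V) :
    (∀ i : ℤ, blowdown v₁ v₂ (Ktilde v₁ v₂ K i) = K) ∧
    (∃ i : ℤ, (i = 0 ∨ i = 1) ∧
      hUcube (blowupE G v₁ v₂) (Ktilde v₁ v₂ K i) (E.map (someEmb V)) = hUcube G K E) ∧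
    (∀ i : ℤ,
      hUcube (blowupE G v₁ v₂) (Ktilde v₁ v₂ K i) (E.map (someEmb V)) ≤ hUcube G K E) := by
  refine ⟨fun i => ?_, ?_, fun i => hUcube_Ktilde_le hsym hneg hne hedge K i E⟩
  · funext u
    simp only [blowdown, Ktilde]
    split_ifs <;> ring
  · by_contra hcon
    obtain ⟨A, hAE, hA⟩ := exists_lt_of_hUcube_ne hsym hneg hne hedge K 0 E
      fun h => hcon ⟨0, Or.inl rfl, h⟩
    obtain ⟨B, hBE, hB⟩ := exists_lt_of_hUcube_ne hsym hneg hne hedge K 1 E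
      fun h => hcon ⟨1, Or.inr rfl, h⟩
    have hAA := hA A hAE
    have hBB := hB B hBE
    -- A nonzero correction forces `s = 2` for `A` and `s = 0` for `B`.
    have hA₁ : v₁ ∈ A := by
      by_contra h
      by_cases h' : v₂ ∈ A <;> simp [ind, h, h'] at hAA
    have hA₂ : v₂ ∈ A := by
      by_contra h
      simp [ind, h, hA₁] at hAA
    have hB₁ : v₁ ∉ B := by
      intro h
      by_cases h' : v₂ ∈ B <;> simp [ind, h, h'] at hBB
    have hB₂ : v₂ ∉ B := by
      intro h
      simp [ind, h, hB₁] at hBB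
    obtain ⟨C, hC, D, hD, hCD⟩ :=
      exists_cut_paste hsym hoff hforest hne hedge K hAE hBE hA₁ hA₂ hB₁ hB₂
    have h1 := hA C hC
    have h2 := hB D hD
    have a₁ : ind A v₁ = 1 := if_pos hA₁
    have a₂ : ind A v₂ = 1 := if_pos hA₂
    have b₁ : ind B v₁ = 0 := if_neg hB₁
    have b₂ : ind B v₂ = 0 := if_neg hB₂
    rw [a₁, a₂] at h1
    rw [b₁, b₂] at h2
    have e1 := even_weight_ind hsym hK A
    have e2 := even_weight_ind hsym hK B
    have e3 := even_weight_ind hsym hK C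
    have e4 := even_weight_ind hsym hK D
    omega
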